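/- arXiv:1502.02651 — 5 statements merged into one kernel-verified Lean document; each statement's English description precedes it below -/
import Mathlib

section
/- Let γ ∈ (0,1), N, T ≥ 1, and S̃ ≥ 0. Let Φ_0, Φ_1, …, Φ_N : ℤ → ℝ be functions such that each Φ_i is nonincreasing, Φ_N(s) ≥ 1 for all s ≤ 0, Φ_N(s) ≥ 0 for all s, and Φ_{i-1}(s) ≥ (1/2 - γ/2)·Φ_i(s-1) + (1/2 + γ/2)·Φ_i(s+1) for all 1 ≤ i ≤ N and s ∈ ℤ. Let z_t^i ∈ {-1,1} for 1 ≤ i ≤ N and 1 ≤ t ≤ T, and define s_t^0 = 0, s_t^i = s_t^{i-1} + z_t^i, and w_t^i = (1/2)·(Φ_i(s_t^{i-1} - 1) - Φ_i(s_t^{i-1} + 1)) (which is nonnegative since Φ_i is nonincreasing). Suppose that for every 1 ≤ i ≤ N the weak-learning inequality Σ_{t=1}^T w_t^i z_t^i ≥ γ·Σ_{t=1}^T w_t^i - S̃·max_{1≤t≤T} w_t^i holds. Then the number of indices t ∈ {1,…,T} with s_t^N ≤ 0 is at most Φ_0(0)·T + S̃·Σ_{i=1}^N max_{1≤t≤T}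 w_t^i. -/
/-- Deterministic core of the mistake bound for the potential-based family of
online boosting algorithms. Weak learners are indexed by `j = 0, …, N-1`
(corresponding to the paper's `i = j+1`), examples by `t = 0, …, T-1`.
`s t j` is the cumulative vote after `j` weak learners on example `t`,
`z j t ∈ {-1,1}` is the `(j+1)`-st weak learner's prediction times the label,
and `w j t = (1/2)(Φ_{j+1}(s_t^j - 1) - Φ_{j+1}(s_t^j + 1))`.
If each potential `Φ i` is nonincreasing, `Φ N ≥ 1` on nonpositive inputs and
`Φ N ≥ 0` everywhere, the potentials satisfy the recursion inequality, and each
weak learner satisfies the weighted weak-learning inequality with edge `γ` and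
excess loss `Stilde`, then the number of examples with `s_t^N ≤ 0` is at most
`Φ_0(0) T + Stilde Σ_j max_t w j t`. -/
theorem stmt_2 (γ : ℝ) (hγ : 0 < γ ∧ γ < 1) (N T : ℕ) (hN : 1 ≤ N) (hT : 1 ≤ T)
    (Stilde : ℝ) (hS : 0 ≤ Stilde)
    (Φ : ℕ → ℤ → ℝ)
    (hmono : ∀ i ≤ N, Antitone (Φ i))
    (hfin1 : ∀ s : ℤ, s ≤ 0 → 1 ≤ Φ N s)
    (hfin0 : ∀ s : ℤ, 0 ≤ Φ N s)
    (hrec : ∀ i < N, ∀ s : ℤ,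
      Φ i s ≥ (1 / 2 - γ / 2) * Φ (i + 1) (s - 1) + (1 / 2 + γ / 2) * Φ (i + 1) (s + 1))
    (z : ℕ → ℕ → ℤ) (hz : ∀ j < N, ∀ t < T, z j t = 1 ∨ z j t = -1)
    (s : ℕ → ℕ → ℤ) (hs0 : ∀ t < T, s t 0 = 0)
    (hsrec : ∀ j < N, ∀ t < T, s t (j + 1) = s t j + z j t)
    (w : ℕ → ℕ → ℝ)
    (hw : ∀ j < N, ∀ t < T,
      w j t = 1 / 2 * (Φ (j + 1) (s t j - 1) - Φ (j + 1) (s t j + 1)))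
    (hwl : ∀ j < N,
      ∑ t ∈ Finset.range T, w j t * (z j t : ℝ)
        ≥ γ * ∑ t ∈ Finset.range T, w j t
          - Stilde * (Finset.range T).sup' (Finset.nonempty_range_iff.mpr (by omega))
              (fun t => w j t)) :
    (((Finset.range T).filter (fun t => s t N ≤ 0)).card : ℝ)
      ≤ Φ 0 0 * T
        + Stilde * ∑ j ∈ Finset.range N,
            (Finset.range T).sup' (Finset.nonempty_range_iff.mpr (by omega))
              (fun t => w j t) := by
  have hTne : (Finset.range T).Nonempty := Finset.nonempty_range_iff.mpr (by omega)
  have key : ∀ n, n ≤ N → ∑ t ∈ Finset.range T, Φ n (s t n) ≤ Φ 0 0 * T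
      + Stilde * ∑ j ∈ Finset.range n, (Finset.range T).sup' hTne (fun t => w j t) := by
    intro n
    induction n with
    | zero =>
      intro _
      have h : ∑ t ∈ Finset.range T, Φ 0 (s t 0) = ∑ t ∈ Finset.range T, Φ 0 0 :=
        Finset.sum_congr rfl fun t ht => by rw [hs0 t (Finset.mem_range.mp ht)]
      rw [h]
      simp [mul_comm]
    | succ j ih =>
      intro hj
      have hj' : j < N := hj
      have ih' := ih hj'.le
      have h1 : ∑ t ∈ Finset.range T, Φ (j + 1) (s t (j + 1))
          ≤ ∑ t ∈ Finset.range T, (Φ j (s t j) + γ * w j t - w j t * (z j t : ℝ)) := by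
        refine Finset.sum_le_sum fun t ht => ?_
        have ht' := Finset.mem_range.mp ht
        have hr := hrec j hj' (s t j)
        rw [hsrec j hj' t ht', hw j hj' t ht']
        rcases hz j hj' t ht' with h | h
        · rw [h]
          push_cast
          linarith
        · rw [h, ← sub_eq_add_neg]
          push_cast
          linarith
      rw [Finset.sum_sub_distrib, Finset.sum_add_distrib, ← Finset.mul_sum] at h1
      have h2 := hwl j hj'
      rw [Finset.sum_range_succ, mul_add]
      linarith
  refine le_trans ?_ (key N le_rfl)
  rw [Finset.card_filter]
  push_cast
  refine Finset.sum_le_sum fun t _ => ?_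
  split_ifs with h
  · exact hfin1 _ h
  · exact hfin0 _
end

section
/- For every σ ∈ [0,1] there exists α ∈ [-2,2] such that σ·e^{-α} + (1-σ)·e^{α} ≤ 1 - (1/2)·(2σ - 1)². -/
theorem stmt_8_aux (σ : ℝ) (h0 : 1 / 2 ≤ σ) (h1 : σ ≤ 1) :
    ∃ α : ℝ, -2 ≤ α ∧ α ≤ 2 ∧
      σ * Real.exp (-α) + (1 - σ) * Real.exp α ≤ 1 - 1 / 2 * (2 * σ - 1) ^ 2 := by
  have he := Real.exp_one_gt_d9
  have he' := Real.exp_one_lt_d9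
  by_cases h : 0.95 ≤ σ
  · refine ⟨1, by norm_num, by norm_num, ?_⟩
    have h3 : Real.exp (-1) ≤ 0.37 := by
      rw [Real.exp_neg]
      apply inv_le_of_inv_le₀ (by norm_num)
      norm_num at he ⊢
      linarith
    have h4 : σ * Real.exp (-1) ≤ σ * 0.37 := by gcongr
    have h5 : (1 - σ) * Real.exp 1 ≤ (1 - σ) * 2.72 := by
      apply mul_le_mul_of_nonneg_left _ (by linarith)
      norm_num at he' ⊢
      linarith
    norm_num at h h4 h5 ⊢
    nlinarith
  · push Not at h
    have hs2 : Real.sqrt σ ^ 2 = σ := Real.sq_sqrt (by linarith)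
    have hr2 : Real.sqrt (1 - σ) ^ 2 = 1 - σ := Real.sq_sqrt (by norm_num at h; linarith)
    have hs : 0 < Real.sqrt σ := Real.sqrt_pos.2 (by linarith)
    have hr : 0 < Real.sqrt (1 - σ) := Real.sqrt_pos.2 (by norm_num at h; linarith)
    set s := Real.sqrt σ
    set r := Real.sqrt (1 - σ)
    have hpos : 0 < s / r := by positivity
    have hge : 1 ≤ s / r := by
      rw [le_div_iff₀ hr]
      nlinarith
    refine ⟨Real.log (s / r), by linarith [Real.log_nonneg hge], ?_, ?_⟩
    · rw [Real.log_le_iff_le_exp hpos]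
      have h2 : Real.exp 2 = Real.exp 1 * Real.exp 1 := by
        rw [← Real.exp_add]; norm_num
      have : (5 : ℝ) ≤ Real.exp 2 := by
        rw [h2]; norm_num at he; nlinarith
      refine le_trans ?_ this
      rw [div_le_iff₀ hr]
      norm_num at h
      nlinarith
    · rw [Real.exp_neg, Real.exp_log hpos]
      have e : σ * (s / r)⁻¹ + (1 - σ) * (s / r) = 2 * (s * r) := by
        rw [← hr2]
        nth_rewrite 1 [← hs2]
        field_simp
        ring
      rw [e]
      have : (s * r) ^ 2 = σ * (1 - σ) := by rw [mul_pow, hs2, hr2]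
      nlinarith [sq_nonneg (1 - 2 * (s * r))]

/-- For every `σ ∈ [0,1]` there exists `α ∈ [-2,2]` with
`σ e^{-α} + (1-σ) e^{α} ≤ 1 - (1/2)(2σ - 1)²`. -/
theorem stmt_8 (σ : ℝ) (hσ : 0 ≤ σ ∧ σ ≤ 1) :
    ∃ α : ℝ, -2 ≤ α ∧ α ≤ 2 ∧
      σ * Real.exp (-α) + (1 - σ) * Real.exp α ≤ 1 - 1 / 2 * (2 * σ - 1) ^ 2 := by
  rcases le_total (1 / 2) σ with h | h
  · exact stmt_8_aux σ h hσ.2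
  · obtain ⟨a, h1, h2, h3⟩ := stmt_8_aux (1 - σ) (by linarith) (by linarith [hσ.1])
    refine ⟨-a, by linarith, by linarith, ?_⟩
    rw [neg_neg]
    nlinarith
end

section
/- Let T ≥ 1, let s_1,…,s_T ∈ ℝ and z_1,…,z_T ∈ {-1,1}. Define w_t = 1/(1 + e^{s_t}), W = Σ_{t=1}^T w_t, and γ = (Σ_{t=1}^T w_t z_t)/(2W). Then there exists α ∈ [-2,2] such that Σ_{t=1}^T [ln(1 + e^{-(s_t + α z_t)}) - ln(1 + e^{-s_t})] ≤ -2γ²·W. -/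
lemma aux_cosh_nonneg (x : ℝ) (hx : 0 ≤ x) :
    Real.cosh x - x * Real.sinh x - 1 ≤ -x ^ 2 / 2 := by
  have hd : ∀ y : ℝ, HasDerivAt (fun y => Real.cosh y - y * Real.sinh y + y ^ 2 / 2)
      (y - y * Real.cosh y) y := by
    intro y
    have h := ((Real.hasDerivAt_cosh y).sub ((hasDerivAt_id y).mul (Real.hasDerivAt_sinh y))).add
      ((hasDerivAt_pow 2 y).div_const 2)
    refine HasDerivAt.congr_deriv (f := fun y => Real.cosh y - y * Real.sinh y + y ^ 2 / 2) h ?_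
    simp only [id]
    norm_num
    ring
  have ha : AntitoneOn (fun y => Real.cosh y - y * Real.sinh y + y ^ 2 / 2) (Set.Ici 0) := by
    apply antitoneOn_of_deriv_nonpos (convex_Ici 0)
    · exact fun y _ => (hd y).continuousAt.continuousWithinAt
    · exact fun y _ => (hd y).differentiableAt.differentiableWithinAt
    · intro y hy
      rw [(hd y).deriv]
      simp only [interior_Ici, Set.mem_Ioi] at hy
      nlinarith [Real.one_le_cosh y]
  have h := ha (Set.mem_Ici.2 le_rfl) (Set.mem_Ici.2 hx) hx
  simp at h
  linarith

lemma aux_cosh (x : ℝ) :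
    Real.cosh x - x * Real.sinh x - 1 ≤ -x ^ 2 / 2 := by
  rcases le_total 0 x with h | h
  · exact aux_cosh_nonneg x h
  · have := aux_cosh_nonneg (-x) (by linarith)
    simpa using this

lemma aux_term (s a w : ℝ) (hw : w = 1 / (1 + Real.exp s)) :
    Real.log (1 + Real.exp (-(s + a))) - Real.log (1 + Real.exp (-s))
      ≤ w * (Real.exp (-a) - 1) := by
  have hs := Real.exp_pos s
  rw [← Real.log_div (by positivity) (by positivity)]
  refine (Real.log_le_sub_one_of_pos (by positivity)).trans (le_of_eq ?_)
  rw [hw, neg_add, Real.exp_add, Real.exp_neg s]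
  field_simp
  ring

/-- Per-stage decrease of the logistic loss: with weights
`w_t = 1/(1 + e^{s_t})`, total weight `W`, and weighted edge
`γ = (Σ w_t z_t)/(2W)` of a weak learner with `±1` predictions `z_t`, some
coefficient `α ∈ [-2,2]` decreases the total logistic loss by at least
`2γ² W`. -/
theorem stmt_12 (T : ℕ) (hT : 1 ≤ T) (s z : Fin T → ℝ)
    (hz : ∀ t, z t = 1 ∨ z t = -1)
    (w : Fin T → ℝ) (hw : ∀ t, w t = 1 / (1 + Real.exp (s t)))
    (W : ℝ) (hW : W = ∑ t, w t)
    (γ : ℝ) (hγ : γ = (∑ t, w t * z t) / (2 * W)) :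
    ∃ α : ℝ, -2 ≤ α ∧ α ≤ 2 ∧
      ∑ t, (Real.log (1 + Real.exp (-(s t + α * z t)))
              - Real.log (1 + Real.exp (-(s t))))
        ≤ -2 * γ ^ 2 * W := by
  have hpos : ∀ t, 0 < w t := fun t => by rw [hw t]; positivity
  have hWpos : 0 < W := by
    rw [hW]
    exact Finset.sum_pos (fun t _ => hpos t) ⟨⟨0, hT⟩, Finset.mem_univ _⟩
  have hS : ∑ t, w t * z t = 2 * γ * W := by
    rw [hγ]; field_simp
  have h1 : ∑ t, w t * z t ≤ W := by
    rw [hW]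
    refine Finset.sum_le_sum fun t _ => ?_
    rcases hz t with h | h <;> rw [h] <;> linarith [hpos t]
  have h2 : -W ≤ ∑ t, w t * z t := by
    rw [hW, ← Finset.sum_neg_distrib]
    refine Finset.sum_le_sum fun t _ => ?_
    rcases hz t with h | h <;> rw [h] <;> linarith [hpos t]
  rw [hS] at h1 h2
  refine ⟨2 * γ, by nlinarith, by nlinarith, ?_⟩
  calc _ ≤ ∑ t, (w t * (Real.cosh (2 * γ) - 1) - w t * z t * Real.sinh (2 * γ)) := by
        refine Finset.sum_le_sum fun t _ => ?_
        refine (aux_term (s t) _ (w t) (hw t)).trans (le_of_eq ?_)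
        rcases hz t with h | h
        · rw [h, mul_one, ← Real.cosh_sub_sinh]; ring
        · rw [h, mul_neg_one, neg_neg, ← Real.cosh_add_sinh]; ring
    _ = W * (Real.cosh (2 * γ) - 2 * γ * Real.sinh (2 * γ) - 1) := by
        rw [Finset.sum_sub_distrib, ← Finset.sum_mul, ← Finset.sum_mul, hS, ← hW]; ring
    _ ≤ W * (-(2 * γ) ^ 2 / 2) := mul_le_mul_of_nonneg_left (aux_cosh _) hWpos.le
    _ = _ := by ring
end

section
/- Let N, T ≥ 1 and R ≥ 0. For 1 ≤ i ≤ N and 1 ≤ t ≤ T let z_t^i ∈ {-1,1} and α_t^i ∈ ℝ. Define s_t^0 = 0, s_t^i = s_t^{i-1} + α_t^i z_t^i, w_t^i = 1/(1 + e^{s_t^{i-1}}), γ_i = (Σ_{t=1}^T w_t^i z_t^i)/(2·Σ_{t=1}^T w_t^i), and M_i = #{t ∈ {1,…,T} : s_t^i ≤ 0} for 1 ≤ i ≤ N. Suppose that for every 1 ≤ i ≤ N and every β ∈ [-2,2], Σ_{t=1}^T ln(1 + e^{-s_t^i}) ≤ Σ_{t=1}^T ln(1 + e^{-(s_t^{i-1}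 + β z_t^i)}) + R. Then (Σ_{i=1}^N γ_i²)·(min_{1≤i≤N} M_i) ≤ T·ln 2 + N·R. -/
theorem aux_exp (x : ℝ) :
    (1 + x) / 2 * Real.exp (-x) + (1 - x) / 2 * Real.exp x - 1 ≤ - (x ^ 2 / 2) := by
  have h1 := Real.add_one_le_exp x
  have h2 := Real.add_one_le_exp (-x)
  have hE := Real.exp_pos x
  have hF := Real.exp_pos (-x)
  have hEF : Real.exp x * Real.exp (-x) = 1 := by rw [← Real.exp_add]; simp
  set E := Real.exp x
  set F := Real.exp (-x)
  have h3 : 0 ≤ (E - 1 - x) * (F - 1 + x) := mul_nonneg (by linarith) (by linarith)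
  nlinarith

theorem aux_log (s b : ℝ) :
    Real.log (1 + Real.exp (-(s + b))) ≤ Real.log (1 + Real.exp (-s))
      + 1 / (1 + Real.exp s) * (Real.exp (-b) - 1) := by
  have hA : 0 < 1 + Real.exp (-s) := by positivity
  have hB : 0 < 1 + Real.exp (-(s + b)) := by positivity
  have h := Real.log_le_sub_one_of_pos (div_pos hB hA)
  rw [Real.log_div hB.ne' hA.ne'] at h
  have e : (1 + Real.exp (-(s + b))) / (1 + Real.exp (-s)) - 1
      = 1 / (1 + Real.exp s) * (Real.exp (-b) - 1) := by
    have hs := Real.exp_pos s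
    rw [neg_add, Real.exp_add, Real.exp_neg s]
    field_simp
    ring
  linarith

theorem aux_step (T : ℕ) (hT : 1 ≤ T) (z s w : ℕ → ℝ) (g : ℝ)
    (hz : ∀ t < T, z t = 1 ∨ z t = -1)
    (hw : ∀ t < T, w t = 1 / (1 + Real.exp (s t)))
    (hg : g = (∑ t ∈ Finset.range T, w t * z t) / (2 * ∑ t ∈ Finset.range T, w t)) :
    -2 ≤ 2 * g ∧ 2 * g ≤ 2 ∧
    ∑ t ∈ Finset.range T, Real.log (1 + Real.exp (-(s t + 2 * g * z t)))
      ≤ ∑ t ∈ Finset.range T, Real.log (1 + Real.exp (-(s t)))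
        - g ^ 2 * ((Finset.range T).filter (fun t => s t ≤ 0)).card := by
  have hwpos : ∀ t ∈ Finset.range T, 0 < w t := by
    intro t ht
    rw [hw t (Finset.mem_range.1 ht)]; positivity
  have hW : 0 < ∑ t ∈ Finset.range T, w t :=
    Finset.sum_pos hwpos ⟨0, Finset.mem_range.2 (by omega)⟩
  set W := ∑ t ∈ Finset.range T, w t with hWdef
  have hgW : ∑ t ∈ Finset.range T, w t * z t = 2 * g * W := by
    rw [hg]; field_simp
  have hub : ∑ t ∈ Finset.range T, w t * z t ≤ W := by
    apply Finset.sum_le_sum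
    intro t ht
    have := hwpos t ht
    rcases hz t (Finset.mem_range.1 ht) with h | h <;> rw [h] <;> linarith
  have hlb : -W ≤ ∑ t ∈ Finset.range T, w t * z t := by
    rw [hWdef, ← Finset.sum_neg_distrib]
    apply Finset.sum_le_sum
    intro t ht
    have := hwpos t ht
    rcases hz t (Finset.mem_range.1 ht) with h | h <;> rw [h] <;> linarith
  have hcard : (((Finset.range T).filter (fun t => s t ≤ 0)).card : ℝ) ≤ 2 * W := by
    rw [Finset.card_filter, hWdef, Finset.mul_sum]
    push_cast
    apply Finset.sum_le_sum
    intro t ht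
    have hp := hwpos t ht
    split_ifs with h
    · rw [hw t (Finset.mem_range.1 ht)]
      have := Real.exp_le_one_iff.2 h
      have := Real.exp_pos (s t)
      rw [mul_one_div, le_div_iff₀ (by positivity)]
      linarith
    · linarith
  refine ⟨by nlinarith, by nlinarith, ?_⟩
  have hx := aux_exp (2 * g)
  have key : ∑ t ∈ Finset.range T, Real.log (1 + Real.exp (-(s t + 2 * g * z t)))
      ≤ ∑ t ∈ Finset.range T, (Real.log (1 + Real.exp (-(s t))) +
        (w t * ((Real.exp (-(2 * g)) + Real.exp (2 * g)) / 2 - 1)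
          + w t * z t * ((Real.exp (-(2 * g)) - Real.exp (2 * g)) / 2))) := by
    apply Finset.sum_le_sum
    intro t ht
    have h := aux_log (s t) (2 * g * z t)
    rw [← hw t (Finset.mem_range.1 ht)] at h
    refine h.trans (le_of_eq ?_)
    rcases hz t (Finset.mem_range.1 ht) with h | h <;> rw [h]
    · rw [mul_one]; ring
    · rw [mul_neg_one, neg_neg]; ring
  rw [Finset.sum_add_distrib, Finset.sum_add_distrib, ← Finset.sum_mul, ← Finset.sum_mul, hgW,
    ← hWdef] at key
  have h1 := mul_le_mul_of_nonneg_left hx hW.le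
  have h2 := mul_le_mul_of_nonneg_left hcard (sq_nonneg g)
  nlinarith

/-- Deterministic core of the mistake bound for AdaBoost.OL. Weak learners are
indexed by `j = 0, …, N-1` (the paper's `i = j+1`), examples by
`t = 0, …, T-1`; `s t j` is expert `j`'s score on example `t` (with
`s t 0 = 0` and `s t (j+1) = s t j + α_j,t z_j,t`), `w j t = 1/(1+e^{s t j})`
are the logistic-loss weights, `γ j` is the weighted edge of weak learner
`j+1`, and `M i` counts the mistakes of expert `i` for `1 ≤ i ≤ N`. If each
per-learner online optimization has regret at most `R` against every fixed
coefficient `β ∈ [-2,2]`, then `(Σ_j γ_j²) · min_{1≤i≤N} M_i ≤ T ln 2 + N R`. -/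
theorem stmt_13 (N T : ℕ) (hN : 1 ≤ N) (hT : 1 ≤ T) (R : ℝ) (hR : 0 ≤ R)
    (z : ℕ → ℕ → ℝ) (hz : ∀ j < N, ∀ t < T, z j t = 1 ∨ z j t = -1)
    (a : ℕ → ℕ → ℝ)
    (s : ℕ → ℕ → ℝ) (hs0 : ∀ t < T, s t 0 = 0)
    (hsrec : ∀ j < N, ∀ t < T, s t (j + 1) = s t j + a j t * z j t)
    (w : ℕ → ℕ → ℝ) (hw : ∀ j < N, ∀ t < T, w j t = 1 / (1 + Real.exp (s t j)))
    (γ : ℕ → ℝ)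
    (hγ : ∀ j < N, γ j = (∑ t ∈ Finset.range T, w j t * z j t)
                            / (2 * ∑ t ∈ Finset.range T, w j t))
    (M : ℕ → ℕ)
    (hM : ∀ i, 1 ≤ i → i ≤ N →
      M i = ((Finset.range T).filter (fun t => s t i ≤ 0)).card)
    (hregret : ∀ j < N, ∀ β : ℝ, -2 ≤ β → β ≤ 2 →
      ∑ t ∈ Finset.range T, Real.log (1 + Real.exp (-(s t (j + 1))))
        ≤ ∑ t ∈ Finset.range T, Real.log (1 + Real.exp (-(s t j + β * z j t))) + R) :
    (∑ j ∈ Finset.range N, γ j ^ 2)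
        * ((Finset.Icc 1 N).inf' (Finset.nonempty_Icc.mpr hN) (fun i => (M i : ℝ)))
      ≤ T * Real.log 2 + N * R := by
  set m := (Finset.Icc 1 N).inf' (Finset.nonempty_Icc.mpr hN) (fun i => (M i : ℝ)) with hm
  have hmle : ∀ j < N, m ≤ (((Finset.range T).filter (fun t => s t j ≤ 0)).card : ℝ) := by
    intro j hj
    rcases Nat.eq_zero_or_pos j with h0 | h0
    · subst h0
      have h1 : m ≤ (M 1 : ℝ) :=
        Finset.inf'_le (fun i => (M i : ℝ)) (Finset.mem_Icc.2 ⟨le_refl 1, hN⟩)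
      refine h1.trans ?_
      rw [hM 1 le_rfl hN]
      norm_cast
      apply Finset.card_le_card
      intro t ht
      rw [Finset.mem_filter] at ht ⊢
      exact ⟨ht.1, (hs0 t (Finset.mem_range.1 ht.1)).le⟩
    · rw [← hM j h0 hj.le]
      exact Finset.inf'_le (fun i => (M i : ℝ)) (Finset.mem_Icc.2 ⟨h0, hj.le⟩)
  have hind : ∀ n ≤ N, ∑ t ∈ Finset.range T, Real.log (1 + Real.exp (-(s t n)))
      + (∑ j ∈ Finset.range n, γ j ^ 2) * m ≤ T * Real.log 2 + n * R := by
    intro n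
    induction n with
    | zero =>
      intro _
      have : ∑ t ∈ Finset.range T, Real.log (1 + Real.exp (-(s t 0)))
          = ∑ t ∈ Finset.range T, Real.log 2 := by
        apply Finset.sum_congr rfl
        intro t ht
        rw [hs0 t (Finset.mem_range.1 ht)]
        norm_num
      rw [this]
      simp
    | succ n ih =>
      intro hn
      have ih := ih (by omega)
      have hn' : n < N := hn
      obtain ⟨h1, h2, h3⟩ := aux_step T hT (z n) (fun t => s t n) (w n) (γ n)
        (hz n hn') (hw n hn') (hγ n hn')
      have h4 := hregret n hn' _ h1 h2
      have h5 := mul_le_mul_of_nonneg_left (hmle n hn') (sq_nonneg (γ n))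
      rw [Finset.sum_range_succ]
      push_cast
      nlinarith
  have hfin := hind N le_rfl
  have hnn : 0 ≤ ∑ t ∈ Finset.range T, Real.log (1 + Real.exp (-(s t N))) := by
    apply Finset.sum_nonneg
    intro t _
    apply Real.log_nonneg
    have := Real.exp_pos (-(s t N))
    linarith
  linarith
end

section
/- Let N, T ≥ 1 and let ℓ_t^i ∈ [0,1] for 1 ≤ i ≤ N and 1 ≤ t ≤ T. Define weights v_1^i = 1 and v_{t+1}^i = v_t^i·exp(-ℓ_t^i). Then Σ_{t=1}^T (Σ_{i=1}^N v_t^i ℓ_t^i)/(Σ_{i=1}^N v_t^i) ≤ (min_{1≤i≤N} Σ_{t=1}^T ℓ_t^i + ln N)/(1 - e^{-1}). -/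
theorem hedge_exp_bound (x : ℝ) (h0 : 0 ≤ x) (h1 : x ≤ 1) :
    Real.exp (-x) ≤ 1 - (1 - Real.exp (-1)) * x := by
  have h := convexOn_exp.2 (Set.mem_univ (0:ℝ)) (Set.mem_univ (-1:ℝ))
    (sub_nonneg.mpr h1) h0 (by ring)
  simp only [smul_eq_mul, mul_zero, zero_add, Real.exp_zero, mul_neg, mul_one] at h
  linarith

/-- Regret bound for the Hedge (exponential weights) algorithm with learning
rate `η = 1`: with losses `ℓ t i ∈ [0,1]` (time `t = 0, …, T-1`, experts
`i = 0, …, N-1`) and weights `v 0 i = 1`, `v (t+1) i = v t i · e^{-ℓ t i}`,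
the total expected loss satisfies
`Σ_t (Σ_i v_t^i ℓ_t^i)/(Σ_i v_t^i) ≤ (min_i Σ_t ℓ_t^i + ln N)/(1 - e⁻¹)`. -/
theorem stmt_14 (N T : ℕ) (hN : 1 ≤ N) (hT : 1 ≤ T)
    (ℓ : ℕ → ℕ → ℝ) (hℓ : ∀ t < T, ∀ i < N, 0 ≤ ℓ t i ∧ ℓ t i ≤ 1)
    (v : ℕ → ℕ → ℝ) (hv1 : ∀ i < N, v 0 i = 1)
    (hvrec : ∀ t < T, ∀ i < N, v (t + 1) i = v t i * Real.exp (-(ℓ t i))) :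
    ∑ t ∈ Finset.range T,
        (∑ i ∈ Finset.range N, v t i * ℓ t i) / (∑ i ∈ Finset.range N, v t i)
      ≤ ((Finset.range N).inf' (Finset.nonempty_range_iff.mpr (by omega))
            (fun i => ∑ t ∈ Finset.range T, ℓ t i) + Real.log N)
          / (1 - Real.exp (-1)) := by
  have hc : 0 < 1 - Real.exp (-1) := by
    have : Real.exp (-1) < 1 := Real.exp_lt_one_iff.mpr (by norm_num)
    linarith
  have hv : ∀ n, n ≤ T → ∀ i < N, v n i = Real.exp (-(∑ t ∈ Finset.range n, ℓ t i)) := by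
    intro n
    induction n with
    | zero => intro _ i hi; simp [hv1 i hi]
    | succ n ih =>
      intro hn i hi
      rw [hvrec n (by omega) i hi, ih (by omega) i hi, ← Real.exp_add, Finset.sum_range_succ]
      congr 1
      ring
  have hpos : ∀ n, n ≤ T → ∀ i < N, 0 < v n i := by
    intro n hn i hi
    rw [hv n hn i hi]
    exact Real.exp_pos _
  have hW : ∀ n, n ≤ T → ∑ i ∈ Finset.range N, v n i ≤ N * Real.exp (-((1 - Real.exp (-1)) *
      ∑ t ∈ Finset.range n,
        (∑ i ∈ Finset.range N, v t i * ℓ t i) / (∑ i ∈ Finset.range N, v t i))) := by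
    intro n
    induction n with
    | zero =>
      intro _
      rw [Finset.sum_congr rfl (fun i hi => hv1 i (Finset.mem_range.mp hi))]
      simp
    | succ n ih =>
      intro hn
      have ih := ih (by omega)
      have hWpos : 0 < ∑ i ∈ Finset.range N, v n i :=
        Finset.sum_pos (fun i hi => hpos n (by omega) i (Finset.mem_range.mp hi))
          (Finset.nonempty_range_iff.mpr (by omega))
      have h1 : ∑ i ∈ Finset.range N, v (n+1) i ≤ ∑ i ∈ Finset.range N,
          (v n i - (1 - Real.exp (-1)) * (v n i * ℓ n i)) := by
        apply Finset.sum_le_sum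
        intro i hi
        have hi := Finset.mem_range.mp hi
        rw [hvrec n (by omega) i hi]
        have := mul_le_mul_of_nonneg_left
          (hedge_exp_bound _ (hℓ n (by omega) i hi).1 (hℓ n (by omega) i hi).2)
          (hpos n (by omega) i hi).le
        linarith
      rw [Finset.sum_sub_distrib, ← Finset.mul_sum] at h1
      rw [Finset.sum_range_succ, mul_add, neg_add, Real.exp_add, ← mul_assoc]
      set W := ∑ i ∈ Finset.range N, v n i
      set S := ∑ i ∈ Finset.range N, v n i * ℓ n i
      have h2 : W - (1 - Real.exp (-1)) * S = W * (-((1 - Real.exp (-1)) * (S / W)) + 1) := by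
        field_simp
        ring
      calc _ ≤ W * (-((1 - Real.exp (-1)) * (S / W)) + 1) := h2 ▸ h1
        _ ≤ W * Real.exp (-((1 - Real.exp (-1)) * (S / W))) :=
          mul_le_mul_of_nonneg_left (Real.add_one_le_exp _) hWpos.le
        _ ≤ _ := mul_le_mul_of_nonneg_right ih (Real.exp_pos _).le
  rw [le_div_iff₀ hc, ← sub_le_iff_le_add]
  apply Finset.le_inf'
  intro i hi
  have h1 := Finset.single_le_sum
    (fun j hj => (hpos T le_rfl j (Finset.mem_range.mp hj)).le) hi
  have h2 := h1.trans (hW T le_rfl)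
  have hN0 : (0:ℝ) < N := by exact_mod_cast hN
  rw [hv T le_rfl i (Finset.mem_range.mp hi)] at h2
  nth_rewrite 1 [← Real.exp_log hN0] at h2
  rw [← Real.exp_add, Real.exp_le_exp] at h2
  linarith
end
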